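/- There exists a 2-(24,4,1) packing with 42 blocks whose leave is a vertex-disjoint union of two cycles of length 3 and one cycle of length 18, covering all 24 points (leave type 3^2 18^1). -/

import Mathlib

/-!
Label the points by the integers modulo 24 and prescribe a leave that is invariant under
translation by 8: the triangles are `{0, 8, 16}` and `{4, 12, 20}`, and the 18-cycle runs through
the residues not divisible by 4 in their cyclic order. The 252 pairs off this leave form 84 orbits
of length 3, and the 14 base blocks contain 84 pairs, one from each orbit. So their 42 translates by
multiples of 8 cover every pair off the leave exactly once and no edge of the leave.
-/

/-- A 2-(24,4,1) packing: a collection of 4-element blocks on 24 points such that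
every pair of distinct points lies in at most one block. -/
def IsPacking (B : Finset (Finset (Fin 24))) : Prop :=
  (∀ b ∈ B, b.card = 4) ∧
  ∀ p q : Fin 24, p ≠ q → ∀ b₁ ∈ B, ∀ b₂ ∈ B,
    p ∈ b₁ → q ∈ b₁ → p ∈ b₂ → q ∈ b₂ → b₁ = b₂

/-- Adjacency in the leave of a packing: the pair of distinct points is covered by no block. -/
def LeaveAdj (B : Finset (Finset (Fin 24))) (p q : Fin 24) : Prop :=
  p ≠ q ∧ ∀ b ∈ B, ¬ (p ∈ b ∧ q ∈ b)

/-- The leave of the packing `B` is a vertex-disjoint union of cycles whose lengths are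
given by the list `L`, covering all 24 points. -/
def LeaveIsCycleType (B : Finset (Finset (Fin 24))) (L : List ℕ) : Prop :=
  ∃ f : (i : Fin L.length) → ZMod (L.get i) → Fin 24,
    Function.Bijective (fun x : Σ i : Fin L.length, ZMod (L.get i) => f x.1 x.2) ∧
    ∀ p q : Fin 24, LeaveAdj B p q ↔
      ∃ i k, (p = f i k ∧ q = f i (k + 1)) ∨ (q = f i k ∧ p = f i (k + 1))

open Finset Function
open scoped Pointwise

section BlockFamily

variable {ι α : Type*} [Fintype ι] [DecidableEq α] {block : ι → Finset α}

/-- The number of blocks of an indexed family that contain both `p` and `q`, counted with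
multiplicity: in a packing it is at most 1 for `p ≠ q`, and it vanishes on the edges of the
leave. -/
def pairCount (block : ι → Finset α) (p q : α) : ℕ :=
  #{i | p ∈ block i ∧ q ∈ block i}

theorem eq_of_pairCount_le_one {p q : α} (hle : pairCount block p q ≤ 1) {i j : ι}
    (hpi : p ∈ block i) (hqi : q ∈ block i) (hpj : p ∈ block j) (hqj : q ∈ block j) : i = j :=
  card_le_one.mp hle i (by simp [hpi, hqi]) j (by simp [hpj, hqj])

theorem injective_of_pairCount_le_one (hcard : ∀ i, 1 < #(block i))
    (hle : ∀ p q, p ≠ q → pairCount block p q ≤ 1) : Injective block := by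
  intro i j hij
  obtain ⟨p, hp, q, hq, hpq⟩ := one_lt_card.mp (hcard i)
  exact eq_of_pairCount_le_one (hle p q hpq) hp hq (hij ▸ hp) (hij ▸ hq)

end BlockFamily

section Leave

variable {ι : Type*} [Fintype ι] {block : ι → Finset (Fin 24)}

theorem isPacking_image (hcard : ∀ i, #(block i) = 4)
    (hle : ∀ p q, p ≠ q → pairCount block p q ≤ 1) : IsPacking (univ.image block) := by
  refine ⟨by simpa using hcard, fun p q hpq b₁ hb₁ b₂ hb₂ hp₁ hq₁ hp₂ hq₂ => ?_⟩
  obtain ⟨i, -, rfl⟩ := mem_image.mp hb₁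
  obtain ⟨j, -, rfl⟩ := mem_image.mp hb₂
  rw [eq_of_pairCount_le_one (hle p q hpq) hp₁ hq₁ hp₂ hq₂]

theorem leaveAdj_image_iff {p q : Fin 24} :
    LeaveAdj (univ.image block) p q ↔ p ≠ q ∧ pairCount block p q = 0 := by
  simp [LeaveAdj, pairCount, filter_eq_empty_iff]

end Leave

theorem iterate_zmodVal_add_one {α : Type*} {f : α → α} {n : ℕ} [NeZero n]
    {x : α} (hx : IsPeriodicPt f n x) (k : ZMod n) : f^[(k + 1).val] x = f (f^[k.val] x) := by
  rw [← iterate_succ_apply' f, ZMod.val_add, ZMod.val_one_eq_one_mod, Nat.add_mod_mod,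
    hx.iterate_mod_apply]

theorem leaveIsCycleType_of_iterate {B : Finset (Finset (Fin 24))} {L : List ℕ}
    [∀ i, NeZero (L.get i)] {next : Fin 24 → Fin 24} {start : Fin L.length → Fin 24}
    (hleave : ∀ p q, LeaveAdj B p q ↔ q = next p ∨ p = next q)
    (hperiod : ∀ i, IsPeriodicPt next (L.get i) (start i))
    (hbij : Bijective fun x : Σ i, ZMod (L.get i) => next^[x.2.val] (start x.1)) :
    LeaveIsCycleType B L := by
  refine ⟨fun i k => next^[k.val] (start i), hbij, fun p q => ?_⟩
  simp only [hleave, fun i => iterate_zmodVal_add_one (hperiod i)]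
  constructor
  · rintro (h | h)
    · obtain ⟨⟨i, k⟩, rfl⟩ := hbij.surjective p
      exact ⟨i, k, .inl ⟨rfl, h⟩⟩
    · obtain ⟨⟨i, k⟩, rfl⟩ := hbij.surjective q
      exact ⟨i, k, .inr ⟨rfl, h⟩⟩
  · rintro ⟨i, k, ⟨rfl, rfl⟩ | ⟨rfl, rfl⟩⟩
    · exact .inl rfl
    · exact .inr rfl

/-- Representatives of the 14 orbits of blocks under translation by 8. -/
def baseBlock : Fin 14 → Finset (Fin 24) :=
  ![{0, 1, 7, 10}, {0, 2, 9, 22}, {0, 3, 17, 20}, {0, 4, 13, 15}, {0, 5, 14, 21},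
    {0, 6, 12, 18}, {0, 11, 19, 23}, {1, 3, 6, 22}, {1, 5, 15, 19}, {1, 9, 20, 21},
    {2, 4, 6, 19}, {2, 5, 11, 12}, {2, 7, 13, 18}, {4, 7, 14, 23}]

theorem card_baseBlock : ∀ i, #(baseBlock i) = 4 := by
  decide

/-- The translates of the base blocks by multiples of 8 modulo 24: the blocks of the packing. -/
def translatedBlock (x : Fin 3 × Fin 14) : Finset (Fin 24) :=
  (![0, 8, 16] x.1 : Fin 24) +ᵥ baseBlock x.2

theorem card_translatedBlock (x : Fin 3 × Fin 14) : #(translatedBlock x) = 4 := by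
  rw [translatedBlock, card_vadd_finset, card_baseBlock]

/-- The successor of a point on its cycle of the leave. -/
def leaveNext (p : Fin 24) : Fin 24 :=
  if p.val % 4 = 0 then p + 8 else if p.val % 4 = 3 then p + 2 else p + 1

theorem pairCount_translatedBlock : ∀ p q, p ≠ q →
    pairCount translatedBlock p q = if q = leaveNext p ∨ p = leaveNext q then 0 else 1 := by
  decide +kernel

theorem pairCount_translatedBlock_le_one (p q : Fin 24) (hpq : p ≠ q) :
    pairCount translatedBlock p q ≤ 1 := by
  rw [pairCount_translatedBlock p q hpq]
  split_ifs <;> decide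

theorem leaveNext_ne_self : ∀ p, leaveNext p ≠ p := by
  decide

theorem leaveAdj_translatedBlock_iff (p q : Fin 24) :
    LeaveAdj (univ.image translatedBlock) p q ↔ q = leaveNext p ∨ p = leaveNext q := by
  rw [leaveAdj_image_iff]
  constructor
  · rintro ⟨hpq, hcount⟩
    simpa [pairCount_translatedBlock p q hpq, or_iff_not_imp_left] using hcount
  · intro h
    have hpq : p ≠ q := by
      rintro rfl
      exact leaveNext_ne_self p (or_self_iff.mp h).symm
    exact ⟨hpq, (pairCount_translatedBlock p q hpq).trans (if_pos h)⟩

/-- Makes `ZMod` of each cycle length a finite type, so that statements about the cycles of the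
leave are decidable. -/
instance neZero_cycleLength (i : Fin [3, 3, 18].length) : NeZero ([3, 3, 18].get i) :=
  ⟨by revert i; decide⟩

/-- A starting point on each of the three cycles of the leave. -/
def cycleStart : Fin [3, 3, 18].length → Fin 24 :=
  ![0, 4, 1]

theorem isPeriodicPt_cycleStart : ∀ i,
    IsPeriodicPt leaveNext ([3, 3, 18].get i) (cycleStart i) := by
  unfold IsPeriodicPt IsFixedPt
  decide

theorem bijective_iterate_cycleStart : Bijective
    fun x : Σ i, ZMod ([3, 3, 18].get i) => leaveNext^[x.2.val] (cycleStart x.1) := by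
  decide +kernel

/-- There is a 2-(24,4,1) packing with 42 blocks whose leave is a vertex-disjoint
union of cycles of lengths [3, 3, 18], covering all 24 points. -/
theorem exists_max_packing_with_leave_type :
    ∃ B : Finset (Finset (Fin 24)), IsPacking B ∧ B.card = 42 ∧
      LeaveIsCycleType B [3, 3, 18] := by
  refine ⟨univ.image translatedBlock, ?_, ?_, ?_⟩
  · exact isPacking_image card_translatedBlock pairCount_translatedBlock_le_one
  · have hinj : Injective translatedBlock :=
      injective_of_pairCount_le_one (by simp [card_translatedBlock])
        pairCount_translatedBlock_le_one
    simp [card_image_of_injective _ hinj]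
  · exact leaveIsCycleType_of_iterate leaveAdj_translatedBlock_iff isPeriodicPt_cycleStart
      bijective_iterate_cycleStart
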